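/- arXiv:1902.00446 — 11 statements merged into one kernel-verified Lean document; each statement's English description precedes it below -/
import Mathlib

section
/- For every prime p there exists a (p-1)-satisfactory coloring of the positive integers; that is, there is a function c : ℤ⁺ → {1,…,p-1} such that for every positive integer a and all integers i, j with 1 ≤ i < j ≤ p-1, c(ia) ≠ c(ja). -/
/-- For every prime `p` there exists a `(p-1)`-satisfactory coloring of the positive
integers: a function `c : ℤ⁺ → {1,…,p-1}` such that for every positive integer `a`
and all `1 ≤ i < j ≤ p-1`, `c (i*a) ≠ c (j*a)`. -/
theorem satisfactory_coloring_of_prime (p : ℕ) (hp : p.Prime) :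
    ∃ c : ℕ → ℕ,
      (∀ m : ℕ, 0 < m → c m ∈ Finset.Icc 1 (p - 1)) ∧
      (∀ a : ℕ, 0 < a → ∀ i j : ℕ, 1 ≤ i → i < j → j ≤ p - 1 →
        c (i * a) ≠ c (j * a)) := by
  refine ⟨fun m => (m / p ^ m.factorization p) % p, ?_, ?_⟩
  · intro m hm
    have h1 : ¬ p ∣ m / p ^ m.factorization p := Nat.not_dvd_ordCompl hp hm.ne'
    have h2 := Nat.mod_lt (m / p ^ m.factorization p) hp.pos
    rw [Nat.dvd_iff_mod_eq_zero] at h1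
    simp only [Finset.mem_Icc]
    omega
  · intro a ha i j hi hij hj h
    have key : ∀ k, 1 ≤ k → k ≤ p - 1 →
        (k * a) / p ^ (k * a).factorization p = k * (a / p ^ a.factorization p) := by
      intro k hk hk'
      have hnd : ¬ p ∣ k := fun hd => by
        have := Nat.le_of_dvd hk hd
        have := hp.pos
        omega
      rw [Nat.ordCompl_mul, Nat.factorization_eq_zero_of_not_dvd hnd]
      simp
    simp only [key i hi (by omega), key j (by omega) hj] at h
    have h1 : ¬ p ∣ a / p ^ a.factorization p := Nat.not_dvd_ordCompl hp ha.ne'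
    have h3 : i ≡ j [MOD p] :=
      Nat.ModEq.cancel_right_of_coprime ((Nat.Prime.coprime_iff_not_dvd hp).2 h1) h
    have := hp.pos
    have := Nat.ModEq.eq_of_lt_of_lt h3 (by omega) (by omega)
    omega
end

section
/- Let m ≥ 1 be an integer. If there exists an (m-1)-satisfactory coloring of the positive integers, then for all integers 0 < b₁ < b₂ < ⋯ < b_m, one has max over all pairs i, j ∈ {1,…,m} of b_i / gcd(b_i, b_j) ≥ m (Graham's conjecture for m). -/
/-- If there exists an `(m-1)`-satisfactory coloring of the positive integers, then
Graham's conjecture holds for `m`: for all integers `0 < b₁ < ⋯ < b_m`, some pair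
`i, j` satisfies `b i / gcd (b i) (b j) ≥ m`. -/
theorem graham_of_satisfactory_coloring (m : ℕ) (hm : 1 ≤ m)
    (h : ∃ c : ℕ → ℕ,
      (∀ x : ℕ, 0 < x → c x ∈ Finset.Icc 1 (m - 1)) ∧
      (∀ a : ℕ, 0 < a → ∀ i j : ℕ, 1 ≤ i → i < j → j ≤ m - 1 →
        c (i * a) ≠ c (j * a))) :
    ∀ b : Fin m → ℕ, (∀ i, 0 < b i) → StrictMono b →
      ∃ i j : Fin m, m ≤ b i / Nat.gcd (b i) (b j) := by
  obtain ⟨c, hc, hne⟩ := h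
  intro b hb hmono
  by_contra hcon
  push Not at hcon
  obtain ⟨i, -, j, -, hij, hcij⟩ := Finset.exists_ne_map_eq_of_card_lt_of_maps_to
    (s := (Finset.univ : Finset (Fin m))) (t := Finset.Icc 1 (m - 1))
    (f := fun i => c (b i)) (by simp; omega) (fun i _ => hc _ (hb i))
  have key : ∀ i j : Fin m, i < j → c (b i) ≠ c (b j) := by
    intro i j hlt
    have hg : 0 < Nat.gcd (b i) (b j) := Nat.gcd_pos_of_pos_left _ (hb i)
    have e1 := Nat.div_mul_cancel (Nat.gcd_dvd_left (b i) (b j))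
    have e2 := Nat.div_mul_cancel (Nat.gcd_dvd_right (b i) (b j))
    have h2 := hcon j i
    rw [Nat.gcd_comm] at h2
    have hbl := hmono hlt
    have h3 := hne _ hg (b i / Nat.gcd (b i) (b j)) (b j / Nat.gcd (b i) (b j))
      (Nat.div_pos (Nat.gcd_le_left _ (hb i)) hg)
      (lt_of_mul_lt_mul_right (by rw [e1, e2]; exact hbl) (Nat.zero_le (Nat.gcd (b i) (b j))))
      (by omega)
    rwa [e1, e2] at h3
  rcases lt_or_gt_of_ne hij with h | h
  · exact key i j h hcij
  · exact key j i h hcij.symm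
end

section
/- Let n ≥ 1 be an integer. If there exists an n-satisfactory coloring of the positive integers, then for every finite nonempty set A of positive integers with |A| odd, the symmetric difference △_{i=1}^{n} (i·A) of the dilates A, 2·A, …, n·A has at least n elements. -/
/-- If there is an `n`-satisfactory coloring of the positive integers, then for every
finite nonempty set `A` of positive integers of odd size, the symmetric difference of
the dilates `A, 2·A, …, n·A` (the set of elements belonging to an odd number of the
dilates) has at least `n` elements. -/
theorem pilz_odd_of_satisfactory_coloring (n : ℕ) (hn : 1 ≤ n)
    (h : ∃ c : ℕ → ℕ,
      (∀ x : ℕ, 0 < x → c x ∈ Finset.Icc 1 n) ∧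
      (∀ a : ℕ, 0 < a → ∀ i j : ℕ, 1 ≤ i → i < j → j ≤ n →
        c (i * a) ≠ c (j * a))) :
    ∀ A : Finset ℕ, A.Nonempty → (∀ a ∈ A, 0 < a) → Odd A.card →
      n ≤ ((((Finset.Icc 1 n).biUnion (fun i => A.image (fun x => i * x))).filter
            (fun x => Odd (((Finset.Icc 1 n).filter
              (fun i => x ∈ A.image (fun y => i * y))).card))).card) := by
  obtain ⟨c, hc1, hc2⟩ := h
  intro A _ hpos hodd
  set U := (Finset.Icc 1 n).biUnion (fun i => A.image (fun x => i * x)) with hU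
  set m : ℕ → ℕ := fun x => ((Finset.Icc 1 n).filter
              (fun i => x ∈ A.image (fun y => i * y))).card with hm
  change n ≤ (U.filter (fun x => Odd (m x))).card
  have key : Finset.Icc 1 n ⊆ (U.filter (fun x => Odd (m x))).image c := by
    intro k hk
    by_contra hcon
    have hev : ∀ x ∈ U.filter (fun x => c x = k), Even (m x) := by
      intro x hx
      rw [Finset.mem_filter] at hx
      by_contra hne
      apply hcon
      rw [Finset.mem_image]
      exact ⟨x, Finset.mem_filter.2 ⟨hx.1, Nat.not_even_iff_odd.1 hne⟩, hx.2⟩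
    set P := (Finset.Icc 1 n ×ˢ A).filter (fun p => c (p.1 * p.2) = k) with hP
    have h1 : P.card = ∑ x ∈ U.filter (fun x => c x = k), m x := by
      rw [Finset.card_eq_sum_card_fiberwise (f := fun p : ℕ × ℕ => p.1 * p.2)
        (t := U.filter (fun x => c x = k))]
      · apply Finset.sum_congr rfl
        intro x hx
        rw [Finset.mem_filter] at hx
        apply Finset.card_bij (fun p _ => p.1)
        · rintro ⟨i, a⟩ hp
          simp only [hP, Finset.mem_filter, Finset.mem_product] at hp
          simp only [Finset.mem_filter, Finset.mem_image]
          exact ⟨hp.1.1.1, a, hp.1.1.2, hp.2⟩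
        · rintro ⟨i, a⟩ hp ⟨j, b⟩ hq hij
          simp only [hP, Finset.mem_filter, Finset.mem_product, Finset.mem_Icc] at hp hq hij
          subst hij
          have : a = b := Nat.eq_of_mul_eq_mul_left (by omega) (hp.2.trans hq.2.symm)
          rw [this]
        · intro i hi
          simp only [Finset.mem_filter, Finset.mem_image] at hi
          obtain ⟨hi, a, ha, hx'⟩ := hi
          refine ⟨(i, a), ?_, rfl⟩
          simp only [hP, Finset.mem_filter, Finset.mem_product]
          exact ⟨⟨⟨hi, ha⟩, by rw [hx']; exact hx.2⟩, hx'⟩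
      · rintro ⟨i, a⟩ hp
        simp only [hP, Finset.coe_filter, Set.mem_ofPred_eq, Finset.mem_product] at hp
        simp only [Finset.coe_filter, Set.mem_ofPred_eq, hU, Finset.mem_biUnion, Finset.mem_image]
        exact ⟨⟨i, hp.1.1, a, hp.1.2, rfl⟩, hp.2⟩
    have h2 : P.card = A.card := by
      apply Finset.card_bij (fun p _ => p.2)
      · rintro ⟨i, a⟩ hp
        simp only [hP, Finset.mem_filter, Finset.mem_product] at hp
        exact hp.1.2
      · rintro ⟨i, a⟩ hp ⟨j, b⟩ hq hij
        simp only [hP, Finset.mem_filter, Finset.mem_product, Finset.mem_Icc] at hp hq hij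
        subst hij
        rcases lt_trichotomy i j with hlt | heq | hlt
        · exact absurd (hp.2.trans hq.2.symm)
            (hc2 a (hpos a hp.1.2) i j (by omega) hlt (by omega))
        · rw [heq]
        · exact absurd (hq.2.trans hp.2.symm)
            (hc2 a (hpos a hp.1.2) j i (by omega) hlt (by omega))
      · intro a ha
        have hsurj := Finset.surj_on_of_inj_on_of_card_le
          (s := Finset.Icc 1 n) (t := Finset.Icc 1 n) (fun i _ => c (i * a))
          (fun i hi => hc1 _ (Nat.mul_pos (Finset.mem_Icc.1 hi).1 (hpos a ha)))
          (fun i j hi hj hij => by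
            rw [Finset.mem_Icc] at hi hj
            rcases lt_trichotomy i j with hlt | heq | hlt
            · exact absurd hij (hc2 a (hpos a ha) i j (by omega) hlt (by omega))
            · exact heq
            · exact absurd hij.symm (hc2 a (hpos a ha) j i (by omega) hlt (by omega)))
          le_rfl k hk
        obtain ⟨i, hi, hik⟩ := hsurj
        refine ⟨(i, a), ?_, rfl⟩
        simp only [hP, Finset.mem_filter, Finset.mem_product]
        exact ⟨⟨hi, ha⟩, hik.symm⟩
    rw [← h2, h1] at hodd
    exact Nat.not_even_iff_odd.2 hodd (Finset.even_sum _ hev)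
  have h3 := Finset.card_le_card key
  rw [Nat.card_Icc] at h3
  have h4 := Finset.card_image_le (s := U.filter (fun x => Odd (m x))) (f := c)
  omega
end

section
/- Let n > 1 be an integer. If there exists an n-satisfactory coloring of the n-core K_n, then the set of n-satisfactory colorings of the positive integers that satisfy the normalization c(i) = i for every i ∈ {1,…,n} has the cardinality of the continuum, 2^{ℵ₀}. -/
/-- The `n`-core: the set of `n`-smooth positive integers. -/
def Kcore (n : ℕ) : Set ℕ := {m : ℕ | 0 < m ∧ ∀ p : ℕ, p.Prime → p ∣ m → p ≤ n}

def smPart (n m : ℕ) : ℕ := (m.primeFactorsList.filter (fun p => p ≤ n)).prod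
def roPart (n m : ℕ) : ℕ := (m.primeFactorsList.filter (fun p => ¬ p ≤ n)).prod

lemma smPart_mul (n : ℕ) {a b : ℕ} (ha : a ≠ 0) (hb : b ≠ 0) :
    smPart n (a * b) = smPart n a * smPart n b := by
  unfold smPart
  rw [((Nat.perm_primeFactorsList_mul ha hb).filter _).prod_eq, List.filter_append,
    List.prod_append]

lemma roPart_mul (n : ℕ) {a b : ℕ} (ha : a ≠ 0) (hb : b ≠ 0) :
    roPart n (a * b) = roPart n a * roPart n b := by
  unfold roPart
  rw [((Nat.perm_primeFactorsList_mul ha hb).filter _).prod_eq, List.filter_append,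
    List.prod_append]

lemma smPart_small {n i : ℕ} (h1 : 1 ≤ i) (h2 : i ≤ n) : smPart n i = i := by
  unfold smPart
  rw [List.filter_eq_self.2, Nat.prod_primeFactorsList (by omega)]
  intro p hp
  have := Nat.le_of_mem_primeFactorsList hp
  simp; omega

lemma roPart_small {n i : ℕ} (h2 : i ≤ n) : roPart n i = 1 := by
  unfold roPart
  rw [List.filter_eq_nil_iff.2, List.prod_nil]
  intro p hp
  have := Nat.le_of_mem_primeFactorsList hp
  simp; omega

lemma smPart_prime {n p : ℕ} (hp : p.Prime) (h : n < p) : smPart n p = 1 := by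
  unfold smPart
  rw [Nat.primeFactorsList_prime hp]
  simp [h]

lemma roPart_prime {n p : ℕ} (hp : p.Prime) (h : n < p) : roPart n p = p := by
  unfold roPart
  rw [Nat.primeFactorsList_prime hp]
  simp [h]

lemma smPart_mem (n m : ℕ) : smPart n m ∈ Kcore n := by
  refine ⟨?_, ?_⟩
  · unfold smPart
    apply Nat.pos_of_ne_zero
    intro h0
    rw [List.prod_eq_zero_iff] at h0
    have := Nat.prime_of_mem_primeFactorsList (List.mem_of_mem_filter h0)
    exact Nat.not_prime_zero this
  · intro p hp hd
    obtain ⟨q, hq, hpq⟩ := (Prime.dvd_prod_iff hp.prime).1 hd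
    rw [List.mem_filter] at hq
    have hqn : q ≤ n := by simpa using hq.2
    have := Nat.le_of_dvd (Nat.prime_of_mem_primeFactorsList hq.1).pos hpq
    omega

/-- If there is an `n`-satisfactory coloring of the `n`-core `K_n` (with `n > 1`),
then the set of `n`-satisfactory colorings of the positive integers normalized by
`c i = i` for `i ∈ {1,…,n}` has the cardinality of the continuum. -/
theorem continuum_many_satisfactory_colorings (n : ℕ) (hn : 1 < n)
    (h : ∃ c : ℕ → ℕ,
      (∀ m ∈ Kcore n, c m ∈ Finset.Icc 1 n) ∧
      (∀ a ∈ Kcore n, ∀ i j : ℕ, 1 ≤ i → i < j → j ≤ n →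
        c (i * a) ≠ c (j * a))) :
    Cardinal.mk {c : ℕ → ℕ //
      (∀ m : ℕ, 0 < m → c m ∈ Finset.Icc 1 n) ∧
      (∀ i ∈ Finset.Icc 1 n, c i = i) ∧
      (∀ a : ℕ, 0 < a → ∀ i j : ℕ, 1 ≤ i → i < j → j ≤ n →
        c (i * a) ≠ c (j * a))} = Cardinal.continuum := by
  obtain ⟨c, hc, hs⟩ := h
  have hK : ∀ i, 1 ≤ i → i ≤ n → i ∈ Kcore n := by
    intro i h1 h2
    rw [← smPart_small h1 h2]
    exact smPart_mem n i
  have hinj : Set.InjOn c (Finset.Icc 1 n : Finset ℕ) := by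
    intro i hi j hj hij
    simp only [Finset.coe_Icc, Set.mem_Icc] at hi hj
    have h1 := hs 1 (hK 1 le_rfl hn.le)
    simp only [mul_one] at h1
    rcases lt_trichotomy i j with h | h | h
    · exact absurd hij (h1 i j hi.1 h hj.2)
    · exact h
    · exact absurd hij.symm (h1 j i hj.1 h hi.2)
  have hmaps : Set.MapsTo c (Finset.Icc 1 n : Finset ℕ) (Finset.Icc 1 n : Finset ℕ) := by
    intro i hi
    have hi' := hi
    simp only [Finset.coe_Icc, Set.mem_Icc] at hi'
    exact hc i (hK i hi'.1 hi'.2)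
  have hsurj : Set.SurjOn c (Finset.Icc 1 n : Finset ℕ) (Finset.Icc 1 n : Finset ℕ) :=
    Finset.surjOn_of_injOn_of_card_le c hmaps hinj le_rfl
  have hg : ∃ g : ℕ → ℕ, (∀ y ∈ Finset.Icc 1 n, g y ∈ Finset.Icc 1 n ∧ c (g y) = y) := by
    have : ∀ y, ∃ x, y ∈ Finset.Icc 1 n → x ∈ Finset.Icc 1 n ∧ c x = y := by
      intro y
      by_cases hy : y ∈ Finset.Icc 1 n
      · obtain ⟨x, hx, hxy⟩ := hsurj (Finset.mem_coe.2 hy)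
        exact ⟨x, fun _ => ⟨hx, hxy⟩⟩
      · exact ⟨0, fun h => absurd h hy⟩
    choose g hg using this
    exact ⟨g, hg⟩
  obtain ⟨g, hg⟩ := hg
  have hgc : ∀ i ∈ Finset.Icc 1 n, g (c i) = i := by
    intro i hi
    have := hg (c i) (hmaps hi)
    exact hinj this.1 hi this.2
  classical
  let e : ℕ → ℕ := fun k => Nat.nth Nat.Prime (n + k)
  have heinj : Function.Injective e := by
    intro a b hab
    have := Nat.nth_injective Nat.infinite_setOf_prime hab
    omega
  have hep : ∀ k, (e k).Prime := fun k => Nat.prime_nth_prime _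
  have hen : ∀ k, n < e k := by
    intro k
    have : n + k + 2 ≤ e k := Nat.add_two_le_nth_prime _
    omega
  let τ : (ℕ → Bool) → ℕ → Equiv.Perm ℕ := fun f r =>
    if ∃ k, e k = r ∧ f k = true then Equiv.swap 1 2 else 1
  have hτ : ∀ f r y, y ∈ Finset.Icc 1 n → τ f r y ∈ Finset.Icc 1 n := by
    intro f r y hy
    simp only [τ]
    split_ifs
    · rw [Equiv.swap_apply_def]
      simp only [Finset.mem_Icc] at hy ⊢
      split_ifs <;> omega
    · exact hy
  have hτ1 : ∀ f, τ f 1 = 1 := by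
    intro f
    simp only [τ]
    rw [if_neg]
    rintro ⟨k, hk, -⟩
    have := hen k
    omega
  have hτe : ∀ f k, τ f (e k) 1 = if f k = true then 2 else 1 := by
    intro f k
    have : (∃ k', e k' = e k ∧ f k' = true) ↔ f k = true := by
      constructor
      · rintro ⟨k', h1, h2⟩
        rwa [← heinj h1]
      · intro h
        exact ⟨k, rfl, h⟩
    simp only [τ, this]
    split_ifs <;> simp
  have hcs : ∀ m, c (smPart n m) ∈ Finset.Icc 1 n := fun m => hc _ (smPart_mem n m)
  apply le_antisymm
  · refine (Cardinal.mk_subtype_le _).trans ?_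
    simp
  · have hb : Cardinal.mk (ℕ → Bool) = Cardinal.continuum := by simp
    rw [← hb]
    refine Cardinal.mk_le_of_injective
      (f := fun f => ⟨fun m => τ f (roPart n m) (g (c (smPart n m))), ?_, ?_, ?_⟩) ?_
    · intro m _
      exact hτ _ _ _ (hg _ (hcs m)).1
    · intro i hi
      have hi' := Finset.mem_Icc.1 hi
      simp only [roPart_small hi'.2, hτ1, smPart_small hi'.1 hi'.2, hgc i hi, Equiv.Perm.one_apply]
    · intro a ha i j h1 hij hj heq
      simp only [roPart_mul n (show i ≠ 0 by omega) ha.ne',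
        roPart_mul n (show j ≠ 0 by omega) ha.ne', roPart_small (hij.le.trans hj),
        roPart_small hj] at heq
      have h2 := (τ f _).injective heq
      have h3 := congrArg c h2
      rw [(hg _ (hcs _)).2, (hg _ (hcs _)).2, smPart_mul n (by omega) ha.ne',
        smPart_mul n (by omega) ha.ne', smPart_small h1 (by omega),
        smPart_small (by omega) hj] at h3
      exact hs _ (smPart_mem n a) i j h1 hij hj h3
    · intro f f' hff
      have hff' := congrArg Subtype.val hff
      funext k
      have hk := congrFun hff' (e k)
      simp only [roPart_prime (hep k) (hen k), smPart_prime (hep k) (hen k),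
        hgc 1 (Finset.mem_Icc.2 ⟨le_rfl, hn.le⟩), hτe] at hk
      cases h1 : f k <;> cases h2 : f' k <;> simp_all
end

section
/- For every positive integer n, there exists an n-satisfactory coloring of K_n if and only if T_n essentially tiles the nonnegative orthant O_n; that is, if and only if there exists a set B ⊆ ℤ^{π(n)} such that every element of T_n + B has a unique representation as a + b with a ∈ T_n, b ∈ B, and O_n ⊆ T_n + B. -/
/-- The primes `p ≤ n`, indexing the coordinates of `ℤ^{π(n)}`. -/
def PrimesLE (n : ℕ) := {p : ℕ // p.Prime ∧ p ≤ n}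

/-- The map `t : K_n → ℤ^{π(n)}` sending `m` to its vector of prime exponents. -/
def expVec (n m : ℕ) : PrimesLE n → ℤ := fun p => (m.factorization p.1 : ℤ)

/-- The polyomino `T_n = t({1,…,n}) ⊆ ℤ^{π(n)}`. -/
def Tpoly (n : ℕ) : Set (PrimesLE n → ℤ) := expVec n '' (Set.Icc 1 n)

/-- The nonnegative orthant `O_n ⊆ ℤ^{π(n)}`. -/
def Orthant (n : ℕ) : Set (PrimesLE n → ℤ) := {v | ∀ p, 0 ≤ v p}

theorem aux_mul (n i a : ℕ) (hi : 0 < i) (ha : 0 < a) :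
    expVec n (i * a) = expVec n i + expVec n a := by
  funext p
  simp [expVec, Nat.factorization_mul hi.ne' ha.ne']

theorem aux_mem_small (n i : ℕ) (hi : 1 ≤ i) (hin : i ≤ n) : i ∈ Kcore n :=
  ⟨hi, fun _ _ hd => (Nat.le_of_dvd hi hd).trans hin⟩

theorem aux_mem_mul (n i a : ℕ) (hi : i ∈ Kcore n) (ha : a ∈ Kcore n) : i * a ∈ Kcore n :=
  ⟨Nat.mul_pos hi.1 ha.1, fun p hp hd => ((hp.dvd_mul).1 hd).elim (hi.2 p hp) (ha.2 p hp)⟩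

theorem aux_inj (n a b : ℕ) (ha : a ∈ Kcore n) (hb : b ∈ Kcore n)
    (h : expVec n a = expVec n b) : a = b := by
  apply Nat.eq_of_factorization_eq ha.1.ne' hb.1.ne'
  intro p
  by_cases hp : p.Prime
  · by_cases hpn : p ≤ n
    · have := congrFun h ⟨p, hp, hpn⟩
      simpa [expVec] using this
    · rw [Nat.factorization_eq_zero_of_not_dvd (fun hd => hpn (ha.2 p hp hd)),
        Nat.factorization_eq_zero_of_not_dvd (fun hd => hpn (hb.2 p hp hd))]
  · simp [Nat.factorization_eq_zero_of_not_prime _ hp]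

theorem aux_surj (n : ℕ) (v : PrimesLE n → ℤ) (hv : v ∈ Orthant n) :
    ∃ m ∈ Kcore n, expVec n m = v := by
  classical
  let g : ℕ → ℕ := fun q => if h : q.Prime ∧ q ≤ n then (v ⟨q, h⟩).toNat else 0
  have hg : ∀ q, g q ≠ 0 → q.Prime ∧ q ≤ n := by
    intro q hq
    by_contra hc
    exact hq (by simp only [g]; rw [dif_neg hc])
  let f : ℕ →₀ ℕ := Finsupp.onFinset (Finset.range (n + 1)) g
    (fun q hq => Finset.mem_range.2 (Nat.lt_succ_of_le (hg q hq).2))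
  have hf : ∀ q, f q = g q := fun q => rfl
  have hfac : (f.prod fun p k => p ^ k).factorization = f := by
    apply Nat.prod_pow_factorization_eq_self
    intro p hp
    exact (hg p (by simpa [hf] using hp)).1
  have hpos : (f.prod fun p k => p ^ k) ≠ 0 := by
    apply Finset.prod_ne_zero_iff.2
    intro p hp
    exact pow_ne_zero _ (hg p (by simpa [hf] using hp)).1.ne_zero
  refine ⟨f.prod fun p k => p ^ k, ⟨Nat.pos_of_ne_zero hpos, ?_⟩, ?_⟩
  · intro p hp hd
    have h1 := hp.factorization_pos_of_dvd hpos hd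
    rw [hfac, hf] at h1
    exact (hg p h1.ne').2
  · funext p
    obtain ⟨q, hq⟩ := p
    simp only [expVec]
    rw [hfac, hf]
    simp only [g]
    rw [dif_pos hq]
    exact Int.toNat_of_nonneg (hv _)

/-- The coloring extends to all of the lattice by an ultrafilter limit of shifts. -/
theorem aux_limit (n : ℕ) (c : ℕ → ℕ)
    (hc : ∀ m ∈ Kcore n, c m ∈ Finset.Icc 1 n)
    (hs : ∀ a ∈ Kcore n, ∀ i j : ℕ, 1 ≤ i → i < j → j ≤ n → c (i * a) ≠ c (j * a)) :
    ∃ f : (PrimesLE n → ℤ) → ℕ, (∀ x, f x ∈ Finset.Icc 1 n) ∧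
      ∀ x, ∀ i j : ℕ, 1 ≤ i → i < j → j ≤ n →
        f (x + expVec n i) ≠ f (x + expVec n j) := by
  classical
  have hfin : Finite (PrimesLE n) :=
    Set.Finite.to_subtype ((Set.finite_Iic n).subset (fun p hp => hp.2))
  have hdec : ∀ v : PrimesLE n → ℤ, ∃ m, v ∈ Orthant n → m ∈ Kcore n ∧ expVec n m = v := by
    intro v
    by_cases hv : v ∈ Orthant n
    · obtain ⟨m, hm⟩ := aux_surj n v hv
      exact ⟨m, fun _ => hm⟩
    · exact ⟨0, fun h => absurd h hv⟩
  choose dec hdec using hdec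
  let U : Ultrafilter ℕ := Filter.hyperfilter ℕ
  let s : (PrimesLE n → ℤ) → ℕ → (PrimesLE n → ℤ) := fun x k => x + fun _ => (k : ℤ)
  have hev : ∀ x, ∀ᶠ k in (U : Filter ℕ), s x k ∈ Orthant n := by
    intro x
    apply Filter.Eventually.filter_mono (Nat.hyperfilter_le_atTop)
    have : ∀ p, ∀ᶠ k : ℕ in Filter.atTop, 0 ≤ s x k p := by
      intro p
      filter_upwards [Filter.eventually_ge_atTop (-(x p)).toNat] with k hk
      simp only [s, Pi.add_apply]
      omega
    exact Filter.eventually_all.2 this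
  have hex : ∀ x, ∃ i ∈ Finset.Icc 1 n, ∀ᶠ k in (U : Filter ℕ), c (dec (s x k)) = i := by
    intro x
    have h1 : ∀ᶠ k in (U : Filter ℕ), ∃ i ∈ Set.Icc 1 n, c (dec (s x k)) = i := by
      filter_upwards [hev x] with k hk
      exact ⟨_, by simpa using hc _ (hdec _ hk).1, rfl⟩
    have := (Ultrafilter.eventually_exists_mem_iff (Set.finite_Icc 1 n)).1 h1
    simpa using this
  choose f hf1 hf2 using hex
  refine ⟨f, hf1, ?_⟩
  intro x i j hi hij hj he
  have key : ∀ k, s x k ∈ Orthant n → ∀ i, 1 ≤ i → i ≤ n →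
      s (x + expVec n i) k ∈ Orthant n →
      dec (s (x + expVec n i) k) = i * dec (s x k) := by
    intro k hk i hi hin hk2
    have h1 := hdec _ hk
    have h2 := hdec _ hk2
    apply aux_inj n _ _ h2.1 (aux_mem_mul n _ _ (aux_mem_small n i hi hin) h1.1)
    rw [aux_mul n _ _ hi h1.1.1, h1.2, h2.2]
    simp only [s]
    abel
  obtain ⟨k, h1, h2, h3, h4, h5⟩ := ((hev x).and ((hev (x + expVec n i)).and
    ((hev (x + expVec n j)).and ((hf2 (x + expVec n i)).and (hf2 (x + expVec n j)))))).exists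
  rw [key k h1 i hi (by omega) h2] at h4
  rw [key k h1 j (by omega) hj h3] at h5
  exact hs _ (hdec _ h1).1 i j hi hij hj (by rw [h4, h5, he])


/-- There is an `n`-satisfactory coloring of `K_n` iff `T_n` essentially tiles the
nonnegative orthant `O_n`: there is `B ⊆ ℤ^{π(n)}` such that every element of
`T_n + B` has a unique representation `a + b` with `a ∈ T_n`, `b ∈ B`, and
`O_n ⊆ T_n + B`. -/
theorem satisfactory_coloring_iff_essential_tiling (n : ℕ) (hn : 0 < n) :
    (∃ c : ℕ → ℕ,
      (∀ m ∈ Kcore n, c m ∈ Finset.Icc 1 n) ∧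
      (∀ a ∈ Kcore n, ∀ i j : ℕ, 1 ≤ i → i < j → j ≤ n →
        c (i * a) ≠ c (j * a))) ↔
    (∃ B : Set (PrimesLE n → ℤ),
      (Orthant n ⊆ {x | ∃ a ∈ Tpoly n, ∃ b ∈ B, x = a + b}) ∧
      (∀ a ∈ Tpoly n, ∀ b ∈ B, ∀ a' ∈ Tpoly n, ∀ b' ∈ B,
        a + b = a' + b' → a = a' ∧ b = b')) := by
  classical
  constructor
  · rintro ⟨c, hc, hs⟩
    obtain ⟨f, hf, hfs⟩ := aux_limit n c hc hs
    have hinj : ∀ x, ∀ i ∈ Finset.Icc 1 n, ∀ j ∈ Finset.Icc 1 n,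
        f (x + expVec n i) = f (x + expVec n j) → i = j := by
      intro x i hi j hj he
      rw [Finset.mem_Icc] at hi hj
      rcases lt_trichotomy i j with h | h | h
      · exact absurd he (hfs x i j hi.1 h hj.2)
      · exact h
      · exact absurd he.symm (hfs x j i hj.1 h hi.2)
    refine ⟨{b | f (-b) = 1}, ?_, ?_⟩
    · intro y _
      have hsurj := Finset.surj_on_of_inj_on_of_card_le (s := Finset.Icc 1 n)
        (t := Finset.Icc 1 n) (fun i _ => f (-y + expVec n i)) (fun i _ => hf _)
        (fun i j hi hj he => hinj _ i hi j hj he) le_rfl 1 (Finset.mem_Icc.2 ⟨le_rfl, hn⟩)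
      obtain ⟨i, hi, h1⟩ := hsurj
      refine ⟨expVec n i, ⟨i, by simpa using hi, rfl⟩, y - expVec n i, ?_, by abel⟩
      show f (-(y - expVec n i)) = 1
      rw [h1]
      congr 1
      abel
    · rintro _ ⟨i, hi, rfl⟩ b hb _ ⟨j, hj, rfl⟩ b' hb' he
      have e1 : -b = -(expVec n i + b) + expVec n i := by abel
      have e2 : -b' = -(expVec n i + b) + expVec n j := by rw [he]; abel
      have hb1 : f (-b) = 1 := hb
      have hb2 : f (-b') = 1 := hb'
      rw [e1] at hb1
      rw [e2] at hb2
      have hij := hinj _ i (by simpa using hi) j (by simpa using hj) (hb1.trans hb2.symm)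
      subst hij
      exact ⟨rfl, add_left_cancel he⟩
  · rintro ⟨B, hcov, huniq⟩
    have hex : ∀ m, ∃ i, m ∈ Kcore n →
        i ∈ Set.Icc 1 n ∧ ∃ b ∈ B, expVec n m = expVec n i + b := by
      intro m
      by_cases hm : m ∈ Kcore n
      · obtain ⟨_, ⟨i, hi, rfl⟩, b, hb, h⟩ :=
          hcov (show expVec n m ∈ Orthant n from fun p => Int.natCast_nonneg _)
        exact ⟨i, fun _ => ⟨hi, b, hb, h⟩⟩
      · exact ⟨0, fun h => absurd h hm⟩
    choose c hc using hex
    refine ⟨c, fun m hm => by simpa using (hc m hm).1, ?_⟩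
    intro a ha i j hi hij hj he
    have ki := aux_mem_small n i hi (by omega)
    have kj := aux_mem_small n j (by omega) hj
    obtain ⟨_, b, hb, h1⟩ := hc _ (aux_mem_mul n i a ki ha)
    obtain ⟨_, b', hb', h2⟩ := hc _ (aux_mem_mul n j a kj ha)
    rw [aux_mul n i a ki.1 ha.1, he] at h1
    rw [aux_mul n j a kj.1 ha.1] at h2
    have h3 : expVec n i + b' = expVec n j + b := by
      have e1 : b = expVec n i + expVec n a - expVec n (c (j * a)) := by rw [h1]; abel
      have e2 : b' = expVec n j + expVec n a - expVec n (c (j * a)) := by rw [h2]; abel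
      rw [e1, e2]; abel
    have h4 := huniq _ ⟨i, ⟨hi, by omega⟩, rfl⟩ b' hb' _ ⟨j, ⟨by omega, hj⟩, rfl⟩ b hb h3
    exact hij.ne (aux_inj n i j ki kj h4.1)
end

section
/- For every positive integer n, there exists an n-satisfactory coloring of K_n if and only if T_n tiles all of ℤ^{π(n)}; that is, if and only if there exists a set B ⊆ ℤ^{π(n)} such that ℤ^{π(n)} = T_n + B and every point of ℤ^{π(n)} has a unique representation as a + b with a ∈ T_n, b ∈ B. -/
noncomputable instance instFintypePLE (n : ℕ) : Fintype (PrimesLE n) :=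
  Fintype.subtype ((Finset.range (n+1)).filter Nat.Prime) (by
    intro x; simp only [Finset.mem_filter, Finset.mem_range]
    constructor
    · rintro ⟨h, h'⟩; exact ⟨h', by omega⟩
    · rintro ⟨h, h'⟩; exact ⟨by omega, h⟩)

noncomputable def numOf (n : ℕ) (v : PrimesLE n → ℤ) : ℕ := ∏ p : PrimesLE n, p.1 ^ (v p).toNat

lemma numOf_mem (n : ℕ) (v : PrimesLE n → ℤ) : numOf n v ∈ Kcore n := by
  refine ⟨Finset.prod_pos fun p _ => pow_pos p.2.1.pos _, ?_⟩
  intro q hq hd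
  obtain ⟨p, _, hp⟩ := (hq.prime.dvd_finsetProd_iff _).1 hd
  have := (Nat.prime_dvd_prime_iff_eq hq p.2.1).1 (hq.dvd_of_dvd_pow hp)
  rw [this]; exact p.2.2

lemma numOf_exp (n i : ℕ) (h1 : 1 ≤ i) (h2 : i ≤ n) : numOf n (expVec n i) = i := by
  have key : ∏ p ∈ (Finset.range (n+1)).filter Nat.Prime, p ^ (i.factorization p) = i := by
    have h := Nat.prod_factorization_pow_eq_self (n := i) (by omega)
    rw [Finsupp.prod_of_support_subset (s := (Finset.range (n+1)).filter Nat.Prime)] at h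
    · exact h
    · intro p hp
      have hp' := Nat.mem_primeFactors.1 (by simpa using hp)
      have := Nat.le_of_dvd (by omega) hp'.2.1
      simp only [Finset.mem_filter, Finset.mem_range]
      exact ⟨by omega, hp'.1⟩
    · simp
  unfold numOf expVec
  simp only [Int.toNat_natCast]
  conv_rhs => rw [← key]
  symm
  refine Finset.prod_bij' (i := fun p hp => (⟨p, by
      simp only [Finset.mem_filter, Finset.mem_range] at hp
      exact ⟨hp.2, by omega⟩⟩ : PrimesLE n)) (j := fun p _ => p.1) ?_ ?_ ?_ ?_ ?_
  · intros; exact Finset.mem_univ _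
  · intro p _
    have := p.2.2
    simp only [Finset.mem_filter, Finset.mem_range]
    exact ⟨by omega, p.2.1⟩
  · intros; rfl
  · intros; rfl
  · intros; rfl

lemma numOf_add (n i : ℕ) (h1 : 1 ≤ i) (h2 : i ≤ n) (v : PrimesLE n → ℤ) (hv : ∀ p, 0 ≤ v p) :
    numOf n (v + expVec n i) = i * numOf n v := by
  conv_rhs => rw [← numOf_exp n i h1 h2]
  unfold numOf
  rw [← Finset.prod_mul_distrib]
  refine Finset.prod_congr rfl fun p _ => ?_
  rw [← pow_add, Pi.add_apply, Int.toNat_add (hv p) (by simp [expVec]), add_comm]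

lemma mul_mem_Kcore (n i a : ℕ) (h1 : 1 ≤ i) (h2 : i ≤ n) (ha : a ∈ Kcore n) :
    i * a ∈ Kcore n := by
  refine ⟨Nat.mul_pos h1 ha.1, fun p hp hd => ?_⟩
  rcases hp.dvd_mul.1 hd with h | h
  · exact (Nat.le_of_dvd h1 h).trans h2
  · exact ha.2 p hp h

lemma expVec_mul (n i a : ℕ) (h1 : 1 ≤ i) (ha : a ∈ Kcore n) :
    expVec n (i * a) = expVec n i + expVec n a := by
  funext p
  simp [expVec, Nat.factorization_mul (by omega : i ≠ 0) ha.1.ne']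

lemma exp_inj (n i j : ℕ) (h1 : 1 ≤ i) (h2 : i ≤ n) (h3 : 1 ≤ j) (h4 : j ≤ n)
    (h : expVec n i = expVec n j) : i = j := by
  rw [← numOf_exp n i h1 h2, h, numOf_exp n j h3 h4]

/-- There is an `n`-satisfactory coloring of `K_n` iff `T_n` tiles all of `ℤ^{π(n)}`:
there is `B ⊆ ℤ^{π(n)}` with `ℤ^{π(n)} = T_n + B` and every point having a unique
representation `a + b` with `a ∈ T_n`, `b ∈ B`. -/
theorem satisfactory_coloring_iff_tiling_of_Z (n : ℕ) (hn : 0 < n) :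
    (∃ c : ℕ → ℕ,
      (∀ m ∈ Kcore n, c m ∈ Finset.Icc 1 n) ∧
      (∀ a ∈ Kcore n, ∀ i j : ℕ, 1 ≤ i → i < j → j ≤ n →
        c (i * a) ≠ c (j * a))) ↔
    (∃ B : Set (PrimesLE n → ℤ),
      ({x | ∃ a ∈ Tpoly n, ∃ b ∈ B, x = a + b} = Set.univ) ∧
      (∀ a ∈ Tpoly n, ∀ b ∈ B, ∀ a' ∈ Tpoly n, ∀ b' ∈ B,
        a + b = a' + b' → a = a' ∧ b = b')) := by
  constructor
  · rintro ⟨c, hc, hd⟩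
    have inj : ∀ a ∈ Kcore n, ∀ i j : ℕ, 1 ≤ i → i ≤ n → 1 ≤ j → j ≤ n →
        c (i * a) = c (j * a) → i = j := by
      intro a ha i j h1 h2 h3 h4 he
      rcases lt_trichotomy i j with h | h | h
      · exact absurd he (hd a ha i j h1 h h4)
      · exact h
      · exact absurd he.symm (hd a ha j i h3 h h2)
    have surj : ∀ a ∈ Kcore n, ∃ i ∈ Finset.Icc 1 n, c (i * a) = 1 := by
      intro a ha
      have := Finset.surjOn_of_injOn_of_card_le (s := Finset.Icc 1 n) (t := Finset.Icc 1 n)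
        (fun i => c (i * a))
        (fun i hi => by
          have hi' := Finset.mem_Icc.1 hi
          exact hc _ (mul_mem_Kcore n i a hi'.1 hi'.2 ha))
        (fun i hi j hj h => by
          have hi' := Finset.mem_Icc.1 hi
          have hj' := Finset.mem_Icc.1 hj
          exact inj a ha i j hi'.1 hi'.2 hj'.1 hj'.2 h) le_rfl
      obtain ⟨i, hi, h⟩ := this (show (1:ℕ) ∈ _ by simp; omega)
      exact ⟨i, hi, h⟩
    let U : Ultrafilter ℕ := Filter.hyperfilter ℕ
    let S : ℕ → PrimesLE n → ℤ := fun N _ => (N : ℤ)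
    have hpos : ∀ x : PrimesLE n → ℤ, ∀ᶠ N in (U : Filter ℕ), ∀ p, 0 ≤ (x + S N) p := by
      intro x
      rw [Filter.eventually_all]
      intro p
      filter_upwards [Nat.hyperfilter_le_atTop (Filter.eventually_ge_atTop (x p).natAbs)] with N hN
      have hN' : (x p).natAbs ≤ N := hN
      simp only [Pi.add_apply, S]
      omega
    let B0 : Set (PrimesLE n → ℤ) := {x | ∀ᶠ N in (U : Filter ℕ), c (numOf n (x + S N)) = 1}
    have ex : ∀ x, ∃ i ∈ Finset.Icc 1 n, x + expVec n i ∈ B0 := by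
      intro x
      have h : ∀ᶠ N in (U : Filter ℕ), ∃ i ∈ (Finset.Icc 1 n : Finset ℕ),
          c (numOf n (x + expVec n i + S N)) = 1 := by
        filter_upwards [hpos x] with N hN
        obtain ⟨i, hi, h⟩ := surj _ (numOf_mem n (x + S N))
        have hi' := Finset.mem_Icc.1 hi
        refine ⟨i, hi, ?_⟩
        rw [add_right_comm, numOf_add n i hi'.1 hi'.2 _ hN, h]
      by_contra hcon
      push Not at hcon
      have h2 : ∀ᶠ N in (U : Filter ℕ), ∀ i ∈ (Finset.Icc 1 n : Finset ℕ),
          ¬ c (numOf n (x + expVec n i + S N)) = 1 := by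
        rw [Filter.eventually_all_finset]
        intro i hi
        exact Ultrafilter.eventually_not.2 (hcon i hi)
      obtain ⟨N, ⟨i, hi, h3⟩, h4⟩ := (h.and h2).exists
      exact h4 i hi h3
    have uniq : ∀ x i j, 1 ≤ i → i ≤ n → 1 ≤ j → j ≤ n → x + expVec n i ∈ B0 →
        x + expVec n j ∈ B0 → i = j := by
      intro x i j h1 h2 h3 h4 hi hj
      obtain ⟨N, ⟨hN, ha⟩, hb⟩ := (((hpos x).and hi).and hj).exists
      rw [add_right_comm, numOf_add n i h1 h2 _ hN] at ha
      rw [add_right_comm, numOf_add n j h3 h4 _ hN] at hb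
      exact inj _ (numOf_mem n (x + S N)) i j h1 h2 h3 h4 (ha.trans hb.symm)
    refine ⟨{b | -b ∈ B0}, ?_, ?_⟩
    · rw [Set.eq_univ_iff_forall]
      intro x
      obtain ⟨i, hi, h⟩ := ex (-x)
      refine ⟨expVec n i, ⟨i, by simpa using hi, rfl⟩, x - expVec n i, ?_, by abel⟩
      have : -(x - expVec n i) = -x + expVec n i := by abel
      simpa only [Set.mem_ofPred_eq, this] using h
    · rintro _ ⟨i, hi, rfl⟩ b hb _ ⟨j, hj, rfl⟩ b' hb' h
      have e1 : -b = -(expVec n i + b) + expVec n i := by abel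
      have e2 : -b' = -(expVec n i + b) + expVec n j := by rw [h]; abel
      have := uniq (-(expVec n i + b)) i j hi.1 hi.2 hj.1 hj.2 (e1 ▸ hb) (e2 ▸ hb')
      subst this
      exact ⟨rfl, add_left_cancel h⟩
  · rintro ⟨B, hB, hu⟩
    have ex : ∀ x, ∃ i, (1 ≤ i ∧ i ≤ n) ∧ ∃ b ∈ B, x = expVec n i + b := by
      intro x
      obtain ⟨_, ⟨i, hi, rfl⟩, b, hb, h⟩ := Set.eq_univ_iff_forall.1 hB x
      exact ⟨i, hi, b, hb, h⟩
    choose f hf g hg hfg using ex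
    refine ⟨fun m => f (expVec n m), fun m _ => Finset.mem_Icc.2 (hf _), ?_⟩
    intro a ha i j h1 hij hj he
    have hi := hfg (expVec n (i * a))
    have hj' := hfg (expVec n (j * a))
    simp only at he
    rw [← he] at hj'
    rw [expVec_mul n i a h1 ha] at hi he hj'
    rw [expVec_mul n j a (by omega) ha] at hj'
    have e : expVec n j + g (expVec n i + expVec n a) = expVec n i + g (expVec n j + expVec n a) := by
      have e1 := eq_sub_of_add_eq' hi.symm
      have e2 := eq_sub_of_add_eq' hj'.symm
      rw [e1, e2]; abel
    have := (hu _ ⟨j, ⟨by omega, hj⟩, rfl⟩ _ (hg _) _ ⟨i, ⟨h1, by omega⟩, rfl⟩ _ (hg _) e).1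
    have := exp_inj n j i (by omega) hj h1 (by omega) this
    omega
end

section
/- Let n and k be positive integers such that p = kn + 1 is prime and 1^k, 2^k, …, n^k are pairwise incongruent modulo p. Then the map c : K_n → ℤ/pℤ given by c(m) = m^k mod p is an n-satisfactory coloring of K_n: c attains exactly n distinct values on K_n, and for every a ∈ K_n and all integers i, j with 1 ≤ i < j ≤ n, (ia)^k ≢ (ja)^k (mod p). -/
/-- If `p = k*n + 1` is prime and `1^k, …, n^k` are pairwise incongruent mod `p`, then
`c(m) = m^k mod p` is an `n`-satisfactory coloring of `K_n`: it attains exactly `n`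
distinct values on `K_n`, and `(i*a)^k ≢ (j*a)^k (mod p)` for `a ∈ K_n` and
`1 ≤ i < j ≤ n`. -/
theorem strong_representative_gives_satisfactory_coloring (n k : ℕ)
    (hn : 0 < n) (hk : 0 < k) (hp : Nat.Prime (k * n + 1))
    (hdist : ∀ i j : ℕ, 1 ≤ i → i < j → j ≤ n →
      (i : ZMod (k * n + 1)) ^ k ≠ (j : ZMod (k * n + 1)) ^ k) :
    Set.ncard {x : ZMod (k * n + 1) | ∃ m ∈ Kcore n, (m : ZMod (k * n + 1)) ^ k = x} = n ∧
    ∀ a ∈ Kcore n, ∀ i j : ℕ, 1 ≤ i → i < j → j ≤ n →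
      ((i * a : ℕ) : ZMod (k * n + 1)) ^ k ≠ ((j * a : ℕ) : ZMod (k * n + 1)) ^ k := by
  haveI : Fact (Nat.Prime (k * n + 1)) := ⟨hp⟩
  have hnp : n < k * n + 1 := by nlinarith
  have hne : ∀ a ∈ Kcore n, (a : ZMod (k * n + 1)) ≠ 0 := by
    intro a ha h0
    rw [ZMod.natCast_eq_zero_iff] at h0
    have := ha.2 _ hp h0
    omega
  have hmem : ∀ i : ℕ, 1 ≤ i → i ≤ n → i ∈ Kcore n := by
    intro i h1 h2
    exact ⟨h1, fun p _ hd => (Nat.le_of_dvd h1 hd).trans h2⟩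
  refine ⟨le_antisymm ?_ ?_, ?_⟩
  · have hsub : {x : ZMod (k * n + 1) | ∃ m ∈ Kcore n, (m : ZMod (k * n + 1)) ^ k = x} ⊆
        ((Polynomial.nthRoots n (1 : ZMod (k * n + 1))).toFinset : Set (ZMod (k * n + 1))) := by
      rintro x ⟨m, hm, rfl⟩
      simp only [Finset.mem_coe, Multiset.mem_toFinset, Polynomial.mem_nthRoots hn]
      rw [← pow_mul]
      have := ZMod.pow_card_sub_one_eq_one (hne m hm)
      simpa using this
    refine (Set.ncard_le_ncard hsub (Finset.finite_toSet _)).trans ?_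
    rw [Set.ncard_coe_finset]
    exact (Multiset.toFinset_card_le _).trans (Polynomial.card_nthRoots n _)
  · have hinj : Set.InjOn (fun i : ℕ => (i : ZMod (k * n + 1)) ^ k)
        (Finset.Icc 1 n : Finset ℕ) := by
      intro i hi j hj hij
      simp only [Finset.coe_Icc, Set.mem_Icc] at hi hj
      rcases lt_trichotomy i j with h | h | h
      · exact absurd hij (hdist i j hi.1 h hj.2)
      · exact h
      · exact absurd hij.symm (hdist j i hj.1 h hi.2)
    have hcard := Finset.card_image_of_injOn hinj
    rw [Nat.card_Icc, Nat.add_sub_cancel] at hcard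
    rw [← Set.ncard_coe_finset] at hcard
    refine hcard.symm.le.trans (Set.ncard_le_ncard ?_ (Set.toFinite _))
    intro x hx
    simp only [Finset.coe_image, Set.mem_image, Finset.coe_Icc, Set.mem_Icc] at hx
    obtain ⟨i, hi, rfl⟩ := hx
    exact ⟨i, hmem i hi.1 hi.2, rfl⟩
  · intro a ha i j h1 hij hj h
    push_cast at h
    rw [mul_pow, mul_pow] at h
    exact hdist i j h1 hij hj (mul_right_cancel₀ (pow_ne_zero k (hne a ha)) h)
end

section
/- Let n be a positive integer such that p = 2n + 1 is prime. Then the map c : K_n → ℤ/pℤ given by c(m) = m² mod p is an n-satisfactory coloring of K_n: c attains exactly n distinct values on K_n, and for every a ∈ K_n and all integers i, j with 1 ≤ i < j ≤ n, (ia)² ≢ (ja)² (mod p). -/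
theorem sq_ne_aux (n : ℕ) (hp : Nat.Prime (2 * n + 1)) (i j : ℕ) (hi : 1 ≤ i) (hij : i < j)
    (hj : j ≤ n) : (i : ZMod (2 * n + 1)) ^ 2 ≠ (j : ZMod (2 * n + 1)) ^ 2 := by
  haveI : Fact (Nat.Prime (2 * n + 1)) := ⟨hp⟩
  intro h
  rcases sq_eq_sq_iff_eq_or_eq_neg.mp h with h | h
  · rw [ZMod.natCast_eq_natCast_iff'] at h
    rw [Nat.mod_eq_of_lt (by omega), Nat.mod_eq_of_lt (by omega)] at h
    omega
  · have h2 : ((i + j : ℕ) : ZMod (2 * n + 1)) = 0 := by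
      push_cast
      rw [h]; ring
    rw [ZMod.natCast_eq_zero_iff] at h2
    have := Nat.le_of_dvd (by omega) h2
    omega

theorem core_ne_zero (n : ℕ) (hn : 0 < n) (hp : Nat.Prime (2 * n + 1)) (a : ℕ)
    (ha : a ∈ Kcore n) : (a : ZMod (2 * n + 1)) ≠ 0 := by
  intro h
  rw [ZMod.natCast_eq_zero_iff] at h
  have := ha.2 _ hp h
  omega

theorem image_aux (n : ℕ) (hn : 0 < n) (hp : Nat.Prime (2 * n + 1)) :
    {x : ZMod (2 * n + 1) | ∃ m ∈ Kcore n, (m : ZMod (2 * n + 1)) ^ 2 = x} =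
      (fun i : ℕ => (i : ZMod (2 * n + 1)) ^ 2) '' (Finset.Icc 1 n : Finset ℕ) := by
  ext x
  simp only [Set.mem_setOf_eq, Set.mem_image, Finset.coe_Icc, Set.mem_Icc]
  constructor
  · rintro ⟨m, hm, rfl⟩
    have h0 := core_ne_zero n hn hp m hm
    have hr : ((m % (2 * n + 1) : ℕ) : ZMod (2 * n + 1)) = m := ZMod.natCast_mod _ _
    have hlt : m % (2 * n + 1) < 2 * n + 1 := Nat.mod_lt _ (by omega)
    have hpos : m % (2 * n + 1) ≠ 0 := by
      intro h
      rw [h] at hr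
      exact h0 (by rw [← hr]; simp)
    generalize m % (2 * n + 1) = r at *
    rcases le_or_gt r n with h | h
    · exact ⟨r, ⟨by omega, h⟩, by rw [hr]⟩
    · refine ⟨2 * n + 1 - r, ⟨by omega, by omega⟩, ?_⟩
      rw [Nat.cast_sub (by omega), ZMod.natCast_self, hr]
      ring
  · rintro ⟨i, ⟨h1, h2⟩, rfl⟩
    exact ⟨i, ⟨h1, fun p _ hd => (Nat.le_of_dvd h1 hd).trans h2⟩, rfl⟩

/-- If `p = 2n + 1` is prime, then `c(m) = m² mod p` is an `n`-satisfactory coloring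
of `K_n`: it attains exactly `n` distinct values on `K_n`, and
`(i*a)² ≢ (j*a)² (mod p)` for `a ∈ K_n` and `1 ≤ i < j ≤ n`. -/
theorem squares_coloring_of_safe_prime (n : ℕ) (hn : 0 < n)
    (hp : Nat.Prime (2 * n + 1)) :
    Set.ncard {x : ZMod (2 * n + 1) | ∃ m ∈ Kcore n, (m : ZMod (2 * n + 1)) ^ 2 = x} = n ∧
    ∀ a ∈ Kcore n, ∀ i j : ℕ, 1 ≤ i → i < j → j ≤ n →
      ((i * a : ℕ) : ZMod (2 * n + 1)) ^ 2 ≠ ((j * a : ℕ) : ZMod (2 * n + 1)) ^ 2 := by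
  constructor
  · rw [image_aux n hn hp, Set.ncard_image_of_injOn, Set.ncard_coe_finset]
    · simp
    · intro i hi j hj h
      simp only [Finset.coe_Icc, Set.mem_Icc] at hi hj
      rcases lt_trichotomy i j with hl | hl | hl
      · exact absurd h (sq_ne_aux n hp i j hi.1 hl hj.2)
      · exact hl
      · exact absurd h.symm (sq_ne_aux n hp j i hj.1 hl hi.2)
  · intro a ha i j hi hij hj h
    haveI : Fact (Nat.Prime (2 * n + 1)) := ⟨hp⟩
    push_cast at h
    rw [mul_pow, mul_pow] at h
    exact sq_ne_aux n hp i j hi hij hj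
      (mul_right_cancel₀ (pow_ne_zero 2 (core_ne_zero n hn hp a ha)) h)
end

section
/- Let n be a positive integer such that p = 3n + 1 is prime. Then p is not a strong representative of order n: there exist integers i, j with 1 ≤ i < j ≤ n and i³ ≡ j³ (mod p). In particular, if n > 2 then there exists an integer i with 2 < i ≤ n such that i³ ≡ 1 (mod p) or i³ ≡ 8 (mod p). -/
theorem aux_small (n m : ℕ) (hn : 2 < n) (hm : 0 < m) (hm3 : m < 8)
    (hp : Nat.Prime (3 * n + 1)) (h7 : (m : ZMod (3 * n + 1)) = 0) : False := by
  rw [ZMod.natCast_eq_zero_iff] at h7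
  have := Nat.le_of_dvd hm h7
  omega

theorem aux_second (n : ℕ) (hn : 2 < n) (hp : Nat.Prime (3 * n + 1)) :
    ∃ i : ℕ, 2 < i ∧ i ≤ n ∧
      ((i : ZMod (3 * n + 1)) ^ 3 = 1 ∨ (i : ZMod (3 * n + 1)) ^ 3 = 8) := by
  haveI : Fact (Nat.Prime (3 * n + 1)) := ⟨hp⟩
  have hpz : (3 * n + 1 : ZMod (3 * n + 1)) = 0 := by
    have := ZMod.natCast_self (3 * n + 1)
    push_cast at this
    exact this
  have hs := fun m h1 h2 => aux_small n m hn h1 h2 hp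
  have h3 : (3 : ZMod (3 * n + 1)) ≠ 0 := fun h =>
    hs 3 (by norm_num) (by norm_num) (by exact_mod_cast h)
  have h7 : (7 : ZMod (3 * n + 1)) ≠ 0 := fun h =>
    hs 7 (by norm_num) (by norm_num) (by exact_mod_cast h)
  have hev : n % 2 = 0 := by
    rcases hp.eq_two_or_odd with h | h <;> omega
  obtain ⟨w, hw⟩ : ∃ w : ZMod (3 * n + 1), w ^ 2 + w + 1 = 0 := by
    haveI : Fact (Nat.Prime 3) := ⟨Nat.prime_three⟩
    obtain ⟨u, hu⟩ := exists_prime_orderOf_dvd_card (G := (ZMod (3 * n + 1))ˣ) 3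
      (by rw [ZMod.card_units]; simp)
    refine ⟨u, ?_⟩
    have h1 : (u : ZMod (3 * n + 1)) ^ 3 = 1 := by
      have h0 := pow_orderOf_eq_one u
      rw [hu] at h0
      rw [← Units.val_pow_eq_pow_val, h0]; rfl
    have h2 : (u : ZMod (3 * n + 1)) - 1 ≠ 0 := by
      intro h
      have : u = 1 := Units.ext (by rw [sub_eq_zero] at h; simpa using h)
      rw [this] at hu
      simp at hu
    apply mul_left_cancel₀ h2
    linear_combination h1
  obtain ⟨a, ha, haw⟩ : ∃ a : ℕ, 2 * a < 3 * n ∧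
      (a : ZMod (3 * n + 1)) ^ 2 + a + 1 = 0 := by
    have hv : ((w.val : ℕ) : ZMod (3 * n + 1)) = w := ZMod.natCast_zmod_val w
    have hlt := ZMod.val_lt w
    rcases lt_trichotomy (2 * w.val) (3 * n) with h | h | h
    · exact ⟨w.val, h, by rw [hv]; exact hw⟩
    · exfalso
      have h' := congrArg (Nat.cast : ℕ → ZMod (3 * n + 1)) h
      push_cast at h'
      rw [hv] at h'
      apply h3
      linear_combination 4 * hw - (2 * w + 1) * (h' + hpz)
    · refine ⟨3 * n - w.val, by omega, ?_⟩
      rw [Nat.cast_sub (by omega), hv]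
      push_cast
      linear_combination hw + (3 * n - 2 * w) * hpz
  have ha3 : (a : ZMod (3 * n + 1)) ^ 3 = 1 := by linear_combination (a - 1) * haw
  by_cases han : a ≤ n
  · refine ⟨a, ?_, han, Or.inl ha3⟩
    by_contra hc
    have : a = 0 ∨ a = 1 ∨ a = 2 := by omega
    rcases this with rfl | rfl | rfl
    · simp at haw
    · apply h3; push_cast at haw; linear_combination haw
    · apply h7; push_cast at haw; linear_combination haw
  · obtain ⟨i, hi⟩ : ∃ i, i + 1 + 2 * a = 3 * n := ⟨3 * n - 1 - 2 * a, by omega⟩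
    have h' := congrArg (Nat.cast : ℕ → ZMod (3 * n + 1)) hi
    push_cast at h'
    have hi2 : (i : ZMod (3 * n + 1)) = 2 * a ^ 2 := by
      linear_combination h' + hpz - 2 * haw
    have hi3 : (i : ZMod (3 * n + 1)) ^ 3 = 8 := by
      rw [hi2]; linear_combination 8 * (a ^ 3 + 1) * ha3
    refine ⟨i, ?_, by omega, Or.inr hi3⟩
    by_contra hc
    have : i = 1 ∨ i = 2 := by omega
    rcases this with rfl | rfl
    · apply h7; push_cast at hi3; linear_combination -hi3
    · have := hs 2 (by norm_num) (by norm_num)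
      have h2 : (2 : ZMod (3 * n + 1)) ≠ 0 := fun h => this (by exact_mod_cast h)
      have hq : (a : ZMod (3 * n + 1)) ^ 2 = 1 := by
        apply mul_left_cancel₀ h2
        push_cast at hi2
        linear_combination -hi2
      have hq1 : (a : ZMod (3 * n + 1)) = 1 := by
        linear_combination ha3 - a * hq
      apply h3
      rw [hq1] at haw
      linear_combination haw

/-- If `p = 3n + 1` is prime, then `p` is not a strong representative of order `n`:
some `1 ≤ i < j ≤ n` satisfy `i³ ≡ j³ (mod p)`. In particular, if `n > 2` there is
`2 < i ≤ n` with `i³ ≡ 1 (mod p)` or `i³ ≡ 8 (mod p)`. -/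
theorem no_three_representative (n : ℕ) (hn : 0 < n)
    (hp : Nat.Prime (3 * n + 1)) :
    (∃ i j : ℕ, 1 ≤ i ∧ i < j ∧ j ≤ n ∧
      (i : ZMod (3 * n + 1)) ^ 3 = (j : ZMod (3 * n + 1)) ^ 3) ∧
    (2 < n → ∃ i : ℕ, 2 < i ∧ i ≤ n ∧
      ((i : ZMod (3 * n + 1)) ^ 3 = 1 ∨ (i : ZMod (3 * n + 1)) ^ 3 = 8)) := by
  refine ⟨?_, fun h => aux_second n h hp⟩
  by_cases h : 2 < n
  · obtain ⟨i, h1, h2, h3 | h3⟩ := aux_second n h hp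
    · exact ⟨1, i, le_rfl, by omega, h2, by rw [h3]; simp⟩
    · exact ⟨2, i, by norm_num, h1, h2, by rw [h3]; norm_num⟩
  · have : n = 1 ∨ n = 2 := by omega
    rcases this with rfl | rfl
    · norm_num at hp
    · exact ⟨1, 2, by norm_num, by norm_num, by norm_num, by decide⟩
end

section
/- Let k be a positive multiple of 4 and let n be a positive integer such that p = kn + 1 is prime and 1^k, 2^k, …, n^k are pairwise incongruent modulo p (i.e., p is a k-representative). Then p < k². In particular, for each such k there are only finitely many k-representatives. -/
/-- If `k` is a positive multiple of 4 and `p = k*n + 1` is a `k`-representative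
(i.e. prime with `1^k, …, n^k` pairwise incongruent mod `p`), then `p < k²`. -/
theorem k_representative_lt_k_sq (k n : ℕ) (hk : 0 < k) (h4 : 4 ∣ k) (hn : 0 < n)
    (hp : Nat.Prime (k * n + 1))
    (hdist : ∀ i j : ℕ, 1 ≤ i → i < j → j ≤ n →
      (i : ZMod (k * n + 1)) ^ k ≠ (j : ZMod (k * n + 1)) ^ k) :
    k * n + 1 < k ^ 2 := by
  obtain ⟨m, rfl⟩ := h4
  rcases Nat.lt_or_ge n (4 * m) with h | h
  · nlinarith
  exfalso
  haveI : Fact (Nat.Prime (4 * m * n + 1)) := ⟨hp⟩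
  have hmod : (4 * m * n + 1) % 4 ≠ 3 := by
    rw [mul_assoc]; omega
  obtain ⟨a, b, hab⟩ := Nat.Prime.sq_add_sq hmod
  have key : ((a : ZMod (4 * m * n + 1))) ^ (4 * m) = (b : ZMod (4 * m * n + 1)) ^ (4 * m) := by
    have h0 : (a : ZMod (4 * m * n + 1)) ^ 2 + (b : ZMod (4 * m * n + 1)) ^ 2 = 0 := by
      have := congrArg (Nat.cast : ℕ → ZMod (4 * m * n + 1)) hab
      rw [ZMod.natCast_self] at this
      exact_mod_cast this
    rw [pow_mul, pow_mul]
    congr 1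
    linear_combination ((a : ZMod (4 * m * n + 1)) ^ 2 - (b : ZMod (4 * m * n + 1)) ^ 2) * h0
  have nz : ∀ c : ℕ, c ^ 2 ≠ 4 * m * n + 1 := fun c hc =>
    Nat.Prime.not_prime_pow (le_refl 2) (hc ▸ hp)
  have ha : 1 ≤ a := by
    rcases Nat.eq_zero_or_pos a with h0 | h0
    · subst h0; exact absurd (by simpa using hab) (nz b)
    · exact h0
  have hb : 1 ≤ b := by
    rcases Nat.eq_zero_or_pos b with h0 | h0
    · subst h0; exact absurd (by simpa using hab) (nz a)
    · exact h0
  have han : a ≤ n := by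
    by_contra! hc
    nlinarith
  have hbn : b ≤ n := by
    by_contra! hc
    nlinarith
  rcases lt_trichotomy a b with hlt | heq | hlt
  · exact hdist a b ha hlt hbn key
  · subst heq
    rw [mul_assoc] at hab; omega
  · exact hdist b a hb hlt han key.symm
end

section
/- For every integer k > 2, the set of primes p that are k-representatives is finite; that is, there are only finitely many primes p of the form p = kn + 1 for which 1^k, 2^k, …, n^k are pairwise incongruent modulo p. -/
lemma krep_nat (p k n : ℕ)
    (h : ∀ i j : ℕ, 1 ≤ i → i < j → j ≤ n → (i : ZMod p) ^ k ≠ (j : ZMod p) ^ k)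
    (i j : ℕ) (hi : 1 ≤ i) (hj : 1 ≤ j) (hin : i ≤ n) (hjn : j ≤ n) (hne : i ≠ j) :
    (i : ZMod p) ^ k ≠ (j : ZMod p) ^ k := by
  rcases lt_or_gt_of_ne hne with hl | hl
  · exact h i j hi hl hjn
  · exact (h j i hj hl hin).symm

lemma krep_int (p k n : ℕ)
    (h : ∀ i j : ℕ, 1 ≤ i → i < j → j ≤ n → (i : ZMod p) ^ k ≠ (j : ZMod p) ^ k)
    (a b : ℤ) (ha : |a| ≤ n) (hb : |b| ≤ n) (hne : (a : ZMod p) ≠ b)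
    (hs : 0 < a ∧ 0 < b ∨ a < 0 ∧ b < 0) :
    (a : ZMod p) ^ k ≠ (b : ZMod p) ^ k := by
  have hne' : a ≠ b := fun e => hne (by rw [e])
  rw [abs_le] at ha hb
  rcases hs with ⟨h1, h2⟩ | ⟨h1, h2⟩
  · have := krep_nat p k n h a.toNat b.toNat (by omega) (by omega) (by omega) (by omega) (by omega)
    have e1 : ((a.toNat : ℤ) : ZMod p) = a := by rw [Int.toNat_of_nonneg h1.le]
    have e2 : ((b.toNat : ℤ) : ZMod p) = b := by rw [Int.toNat_of_nonneg h2.le]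
    rw [Int.cast_natCast] at e1 e2
    rwa [e1, e2] at this
  · have := krep_nat p k n h (-a).toNat (-b).toNat (by omega) (by omega) (by omega) (by omega)
      (by omega)
    have e1 : (((-a).toNat : ℤ) : ZMod p) = -a := by
      rw [Int.toNat_of_nonneg (by omega)]; push_cast; rfl
    have e2 : (((-b).toNat : ℤ) : ZMod p) = -b := by
      rw [Int.toNat_of_nonneg (by omega)]; push_cast; rfl
    rw [Int.cast_natCast] at e1 e2
    rw [e1, e2] at this
    intro e
    apply this
    rw [neg_pow, e, ← neg_pow]

lemma krep_root (p k n : ℕ) (hp : p.Prime) (hk : 2 < k) (hn : 0 < n) (h : p = k * n + 1) :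
    ∃ z : ZMod p, z ≠ 0 ∧ z ^ k = 1 ∧ z ≠ 1 ∧ z ^ 2 ≠ 1 := by
  have : Fact p.Prime := ⟨hp⟩
  obtain ⟨g, hg⟩ := IsCyclic.exists_ofOrder_eq_natCard (α := (ZMod p)ˣ)
  have hc : orderOf g = k * n := by
    rw [hg, Nat.card_eq_fintype_card, ZMod.card_units]; omega
  have ho : orderOf (g ^ n) = k := by
    rw [orderOf_pow_of_dvd hn.ne' (by rw [hc]; exact dvd_mul_left _ _), hc, Nat.mul_div_cancel _ hn]
  refine ⟨((g ^ n : (ZMod p)ˣ) : ZMod p), Units.ne_zero _, ?_, ?_, ?_⟩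
  · have := pow_orderOf_eq_one (g ^ n)
    rw [ho] at this
    rw [← Units.val_pow_eq_pow_val, this, Units.val_one]
  · intro e
    have : g ^ n = 1 := Units.ext e
    rw [this, orderOf_one] at ho
    omega
  · intro e
    have : (g ^ n) ^ 2 = 1 := Units.ext (by rw [Units.val_pow_eq_pow_val, e, Units.val_one])
    have := Nat.le_of_dvd (by norm_num) (orderOf_dvd_of_pow_eq_one this)
    omega

lemma krep_box (a b n : ℕ) (hn : 0 < n) (h : a / n = b / n) : |(a : ℤ) - b| ≤ n := by
  have h1 := Nat.div_add_mod a n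
  have h2 := Nat.div_add_mod b n
  have h3 := Nat.mod_lt a hn
  have h4 := Nat.mod_lt b hn
  rw [h] at h1
  rw [abs_le]
  constructor <;> omega

/-- For every `k > 2` there are only finitely many `k`-representatives: primes
`p = k*n + 1` with `1^k, …, n^k` pairwise incongruent mod `p`. -/
theorem finitely_many_k_representatives (k : ℕ) (hk : 2 < k) :
    {p : ℕ | p.Prime ∧ ∃ n : ℕ, 0 < n ∧ p = k * n + 1 ∧
      ∀ i j : ℕ, 1 ≤ i → i < j → j ≤ n →
        (i : ZMod p) ^ k ≠ (j : ZMod p) ^ k}.Finite := by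
  refine (Set.finite_Iic ((k + 1) ^ 3)).subset ?_
  rintro p ⟨hp, n, hn, hpn, h⟩
  rw [Set.mem_Iic]
  by_contra! hlt
  have : Fact p.Prime := ⟨hp⟩
  obtain ⟨z, hz0, hzk, hz1, hz2⟩ := krep_root p k n hp hk hn hpn
  have hb : ∀ x : ZMod p, x.val / n < k + 1 := by
    intro x
    have := x.val_lt
    rw [Nat.div_lt_iff_lt_mul hn]
    nlinarith
  let B : ZMod p → Fin (k + 1) := fun x => ⟨x.val / n, hb x⟩
  obtain ⟨x, y, hxy, hf⟩ := Fintype.exists_ne_map_eq_of_card_lt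
    (fun x : ZMod p => (B x, B (z * x), B (z ^ 2 * x))) (by
      simp only [Fintype.card_prod, Fintype.card_fin, ZMod.card]
      linarith [show (k + 1) * ((k + 1) * (k + 1)) = (k + 1) ^ 3 by ring])
  simp only [Prod.mk.injEq, B, Fin.mk.injEq] at hf
  obtain ⟨h0, h1, h2⟩ := hf
  have key : ∀ u v : ZMod p, u.val / n = v.val / n →
      ∃ a : ℤ, |a| ≤ n ∧ (a : ZMod p) = u - v := by
    intro u v huv
    exact ⟨_, krep_box _ _ n hn huv, by simp⟩
  obtain ⟨a, ha, ha'⟩ := key _ _ h0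
  obtain ⟨b, hb, hb'⟩ := key _ _ h1
  obtain ⟨c, hc, hc'⟩ := key _ _ h2
  have hd : x - y ≠ 0 := sub_ne_zero.2 hxy
  rw [← mul_sub] at hb' hc'
  rw [← ha'] at hb' hc' hd
  have a0 : a ≠ 0 := by rintro rfl; simp at hd
  have hb0 : (b : ZMod p) ≠ 0 := by rw [hb']; exact mul_ne_zero hz0 hd
  have hc0 : (c : ZMod p) ≠ 0 := by rw [hc']; exact mul_ne_zero (pow_ne_zero _ hz0) hd
  have b0 : b ≠ 0 := by rintro rfl; simp at hb0
  have c0 : c ≠ 0 := by rintro rfl; simp at hc0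
  have eab : (a : ZMod p) ^ k = (b : ZMod p) ^ k := by rw [hb', mul_pow, hzk, one_mul]
  have eac : (a : ZMod p) ^ k = (c : ZMod p) ^ k := by
    rw [hc', mul_pow, ← pow_mul, mul_comm 2 k, pow_mul, hzk, one_pow, one_mul]
  have nab : (a : ZMod p) ≠ b := by
    rw [hb']; intro e
    exact hz1 (mul_right_cancel₀ hd (by rw [← e, one_mul]))
  have nac : (a : ZMod p) ≠ c := by
    rw [hc']; intro e
    exact hz2 (mul_right_cancel₀ hd (by rw [← e, one_mul]))
  have nbc : (b : ZMod p) ≠ c := by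
    rw [hc', hb']; intro e
    have e1 := mul_right_cancel₀ hd e
    exact hz1 (mul_left_cancel₀ hz0 (by rw [mul_one, ← pow_two, ← e1]))
  have H1 : ¬ (0 < a ∧ 0 < b ∨ a < 0 ∧ b < 0) := fun hs => krep_int p k n h a b ha hb nab hs eab
  have H2 : ¬ (0 < a ∧ 0 < c ∨ a < 0 ∧ c < 0) := fun hs => krep_int p k n h a c ha hc nac hs eac
  have H3 : ¬ (0 < b ∧ 0 < c ∨ b < 0 ∧ c < 0) := fun hs => krep_int p k n h b c hb hc nbc hs (eab.symm.trans eac)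
  omega
end
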